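/- arXiv:1902.05741 — 9 statements merged into one kernel-verified Lean document; each statement's English description precedes it below -/
import Mathlib

section
/- Let ℓ be a nonnegative integer with ℓ ≠ 0 and ℓ ≠ 1. If p : ℤ → ℂ satisfies (nℓ + m + n)·p(m) − (mℓ + m + n)·p(n) − (m − n)·p(m + n) = 0 for all m, n ∈ ℤ, then p(n) = n·p(1) for all n ∈ ℤ (so every such central extension is trivial, being absorbed by a redefinition of the generator P₀). -/
/-!
The integers at which a solution `p` agrees with a fixed linear function `n ↦ n c` are closed under
sums of distinct elements, whatever `ℓ` is. Hence `p` is linear on the positive integers as soon as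
`p 2 = 2 p 1`. The pair `(2, -1)` gives `(ℓ - 1) (p 2 - 2 p 1) = 0` once `p (-1) = -p 1`, and the
pairs `(1, 0)` and `(m, -m)` give `(ℓ + 1) p 0 = 0` and `m ℓ (p m + p (-m)) = -2 m p 0`, so `p` is
odd.
-/

section

variable {R M : Type*} [CommRing R] [AddCommGroup M] [Module R M] {ℓ : R} {p : ℤ → M}

/-- The cocycle condition on the central term `δ_{m+r,0} p(m)` of `[L_m, P_r]`, obtained from the
graded Jacobi identity for `(L_m, L_n, P_r)` with `m + n + r = 0`. The weight `ℓ` may be any scalar,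
and the central term takes values in a module. -/
def IsLPCocycle (ℓ : R) (p : ℤ → M) : Prop :=
  ∀ m n : ℤ,
    ((n : R) * ℓ + m + n) • p m - ((m : R) * ℓ + m + n) • p n - ((m : R) - n) • p (m + n) = 0

namespace IsLPCocycle

variable [IsDomain R] [Module.IsTorsionFree R M]

theorem map_zero (hp : IsLPCocycle ℓ p) (hℓ : ℓ ≠ -1) : p 0 = 0 := by
  have h : (ℓ + 1) • p 0 = 0 := by
    have h10 := hp 1 0
    rw [add_zero] at h10
    push_cast at h10
    linear_combination (norm := module) -h10
  exact (smul_eq_zero_iff_right (mt eq_neg_of_add_eq_zero_left hℓ)).1 h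

theorem odd [CharZero R] (hp : IsLPCocycle ℓ p) (hℓ₀ : ℓ ≠ 0) (hℓ : ℓ ≠ -1) :
    Function.Odd p := by
  intro m
  obtain rfl | hm := eq_or_ne m 0
  · rw [neg_zero, hp.map_zero hℓ, neg_zero]
  have h : ((m : R) * ℓ) • (p (-m) + p m) = 0 := by
    have hneg := hp m (-m)
    rw [add_neg_cancel, hp.map_zero hℓ] at hneg
    push_cast at hneg
    linear_combination (norm := module) -hneg
  have hmℓ : (m : R) * ℓ ≠ 0 := mul_ne_zero (Int.cast_ne_zero.2 hm) hℓ₀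
  exact eq_neg_of_add_eq_zero_left ((smul_eq_zero_iff_right hmℓ).1 h)

theorem map_two (hp : IsLPCocycle ℓ p) (hℓ : ℓ ≠ 1) (hneg : p (-1) = -p 1) :
    p 2 = (2 : R) • p 1 := by
  have h : (ℓ - 1) • (p 2 - (2 : R) • p 1) = 0 := by
    have h21 := hp 2 (-1)
    rw [show (2 + -1 : ℤ) = 1 by norm_num, hneg] at h21
    push_cast at h21
    linear_combination (norm := module) -h21
  exact sub_eq_zero.1 ((smul_eq_zero_iff_right (sub_ne_zero.2 hℓ)).1 h)

theorem map_add_eq_smul [CharZero R] (hp : IsLPCocycle ℓ p) {m n : ℤ} {c : M} (hmn : m ≠ n)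
    (hm : p m = (m : R) • c) (hn : p n = (n : R) • c) : p (m + n) = ((m + n : ℤ) : R) • c := by
  have h := hp m n
  rw [hm, hn] at h
  have hsub : (m : R) - n ≠ 0 := sub_ne_zero.2 (Int.cast_injective.ne hmn)
  apply smul_right_injective M hsub
  push_cast
  linear_combination (norm := module) -h

theorem map_natCast [CharZero R] (hp : IsLPCocycle ℓ p) (h₀ : p 0 = 0)
    (h₂ : p 2 = (2 : R) • p 1) (k : ℕ) : p k = (k : R) • p 1 := by
  induction k with
  | zero => simpa using h₀
  | succ k ih =>
    obtain rfl | hk := eq_or_ne k 1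
    · simpa [one_add_one_eq_two] using h₂
    · have hne : (k : ℤ) ≠ 1 := mod_cast hk
      simpa using hp.map_add_eq_smul (c := p 1) hne (by simpa using ih) (by simp)

end IsLPCocycle

theorem central_extension_p_trivial_general [IsDomain R] [CharZero R] [Module.IsTorsionFree R M]
    (hp : IsLPCocycle ℓ p) (hℓ₀ : ℓ ≠ 0) (hℓ₁ : ℓ ≠ 1) (hℓ : ℓ ≠ -1) (n : ℤ) :
    p n = (n : R) • p 1 := by
  have hodd : Function.Odd p := hp.odd hℓ₀ hℓ
  have hnat : ∀ k : ℕ, p k = (k : R) • p 1 :=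
    hp.map_natCast (hp.map_zero hℓ) (hp.map_two hℓ₁ (hodd 1))
  obtain ⟨k, rfl | rfl⟩ := n.eq_nat_or_neg
  · rw [hnat, Int.cast_natCast]
  · rw [hodd, hnat, Int.cast_neg, Int.cast_natCast, neg_smul]

end

/-- For a nonnegative integer `ℓ` with `ℓ ≠ 0` and `ℓ ≠ 1`, any solution
`p : ℤ → ℂ` of the recurrence `(nℓ + m + n)p(m) − (mℓ + m + n)p(n) − (m − n)p(m + n) = 0`
satisfies `p(n) = n·p(1)`, i.e. the central extension is trivial. -/
theorem central_extension_p_trivial (ℓ : ℕ) (hℓ0 : ℓ ≠ 0) (hℓ1 : ℓ ≠ 1)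
    (p : ℤ → ℂ)
    (hrec : ∀ m n : ℤ,
      ((n : ℂ) * (ℓ : ℂ) + (m : ℂ) + (n : ℂ)) * p m
      - ((m : ℂ) * (ℓ : ℂ) + (m : ℂ) + (n : ℂ)) * p n
      - ((m : ℂ) - (n : ℂ)) * p (m + n) = 0) :
    ∀ n : ℤ, p n = (n : ℂ) * p 1 := by
  have hℓ : (ℓ : ℂ) ≠ -1 := fun h ↦ Nat.cast_add_one_ne_zero ℓ (eq_neg_iff_add_eq_zero.1 h)
  exact central_extension_p_trivial_general (R := ℂ) (ℓ := ℓ) hrec (mod_cast hℓ0) (mod_cast hℓ1) hℓ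
end

section
/- Let ℓ = 0. If p : ℤ → ℂ satisfies (m + n)·p(m) − (m + n)·p(n) − (m − n)·p(m + n) = 0 for all m, n ∈ ℤ, then p(n) = ½·n²·(p(1) + p(−1)) + ½·n·(p(1) − p(−1)) for all n ∈ ℤ. -/
/-!
Step up from `n` to `n + 1` by adding `1`, then back down by adding `-1`. Eliminating `p (n + 1)`
from these two instances of the recurrence leaves `p n` with the constant coefficient
`n * (n + 1) - (n - 1) * (n + 2) = 2`, so neither induction on `n` nor division by a coefficient
that may vanish is needed.
-/

theorem central_extension_p_ell_zero_general {R M : Type*} [CommRing R] [AddCommGroup M]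
    [Module R M] (p : R → M)
    (h_one : ∀ m : R, (m + 1) • p m - (m + 1) • p 1 - (m - 1) • p (m + 1) = 0)
    (h_neg_one : ∀ m : R, (m - 1) • p m - (m - 1) • p (-1) - (m + 1) • p (m - 1) = 0) (n : R) :
    (2 : R) • p n = n ^ 2 • (p 1 + p (-1)) + n • (p 1 - p (-1)) := by
  have step_up : (n - 1) • p (n + 1) = (n + 1) • p n - (n + 1) • p 1 :=
    (sub_eq_zero.mp (h_one n)).symm
  have step_down : n • p (n + 1) = (n + 2) • p n + n • p (-1) := by
    have h := h_neg_one (n + 1)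
    rw [add_sub_cancel_right] at h
    linear_combination (norm := module) h
  have eliminated : n • ((n + 1) • p n - (n + 1) • p 1) =
      (n - 1) • ((n + 2) • p n + n • p (-1)) := by
    rw [← step_up, ← step_down, smul_comm]
  linear_combination (norm := module) eliminated

/-- For `ℓ = 0`, any solution `p : ℤ → ℂ` of the recurrence
`(m + n)p(m) − (m + n)p(n) − (m − n)p(m + n) = 0` satisfies
`p(n) = ½n²(p(1) + p(−1)) + ½n(p(1) − p(−1))`. -/
theorem central_extension_p_ell_zero (p : ℤ → ℂ)
    (hrec : ∀ m n : ℤ,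
      ((m : ℂ) + (n : ℂ)) * p m - ((m : ℂ) + (n : ℂ)) * p n
      - ((m : ℂ) - (n : ℂ)) * p (m + n) = 0) :
    ∀ n : ℤ, p n = (1 / 2) * (n : ℂ) ^ 2 * (p 1 + p (-1))
      + (1 / 2) * (n : ℂ) * (p 1 - p (-1)) := by
  intro n
  have h := central_extension_p_ell_zero_general p
    (fun m ↦ by simpa using hrec m 1)
    (fun m ↦ by simpa [← sub_eq_add_neg] using hrec m (-1)) n
  simp only [zsmul_eq_mul, Int.cast_pow, Int.cast_ofNat] at h
  linear_combination (1 / 2) * h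
end

section
/- Fix a nonnegative integer ℓ₁ and a nonnegative half-integer ℓ₂. If ζ : (ℤ+ℓ₂)×(ℤ+ℓ₂) → ℂ is antisymmetric (ζ(u,v) = −ζ(v,u)) and satisfies relation (R), then ζ(u, ℓ₂) = 0 for every u ∈ ℤ+ℓ₂ with −ℓ₁−ℓ₂ ≤ u ≤ ℓ₂. -/
/-!
At `m = 1`, `v = ℓ₂` the second coefficient `mℓ₂ - v` of relation (R) is zero. What remains links
only neighbouring values of `ζ (·, ℓ₂)`: for `u = ℓ₂ - (k + 1)` it reads
`(k + 1) ζ(ℓ₂ - k, ℓ₂) + (ℓ₁ + 2ℓ₂ - k) ζ(ℓ₂ - (k + 1), ℓ₂) = 0`.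
Antisymmetry gives `ζ(ℓ₂, ℓ₂) = 0`, and the zero propagates downwards from `ℓ₂` until the
coefficient `ℓ₁ + 2ℓ₂ - k` vanishes, that is, until `u = -ℓ₁ - ℓ₂` has been reached.
-/

section Domain

variable {A M : Type*} [CommRing A] [AddCommGroup M] [Module A M]

/-- The coset `ℤ + a` of the integers in `A`, the index set of `ζ`. -/
def intCoset (a : A) : Set A :=
  {x | ∃ n : ℤ, x = (n : A) + a}

/-- Relation (R) for the central extension terms `ζ` of `𝔤_{ℓ₁,ℓ₂}`. The function `ζ` is defined
on all of `A × A`, but only its values on `(ℤ + ℓ₂) × (ℤ + ℓ₂)` are constrained. -/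
def CentralTermRelation (ℓ₁ ℓ₂ : A) (ζ : A → A → M) : Prop :=
  ∀ (m : ℤ) (u v : A), u ∈ intCoset ℓ₂ → v ∈ intCoset ℓ₂ →
    (m * ℓ₂ - u) • ζ (m + u) v + (m * ℓ₂ - v) • ζ u (m + v)
      + (m * ℓ₁ + m + u + v) • ζ u v = 0

theorem self_mem_intCoset (a : A) : a ∈ intCoset a :=
  ⟨0, by simp⟩

theorem sub_natCast_mem_intCoset (a : A) (k : ℕ) : a - k ∈ intCoset a :=
  ⟨-k, by push_cast; ring⟩

theorem CentralTermRelation.succ_smul_add_smul_eq_zero {ℓ₁ ℓ₂ : A} {ζ : A → A → M}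
    (hζ : CentralTermRelation ℓ₁ ℓ₂ ζ) (k : ℕ) :
    (k + 1 : A) • ζ (ℓ₂ - k) ℓ₂ + (ℓ₁ + 2 * ℓ₂ - k) • ζ (ℓ₂ - (k + 1 : ℕ)) ℓ₂ = 0 := by
  have h := hζ 1 (ℓ₂ - (k + 1 : ℕ)) ℓ₂ (sub_natCast_mem_intCoset ℓ₂ (k + 1)) (self_mem_intCoset ℓ₂)
  have hv : ((1 : ℤ) : A) * ℓ₂ - ℓ₂ = 0 := by simp
  rw [hv, zero_smul, add_zero] at h
  convert h using 3 <;> push_cast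
  · ring
  · congr 1
    ring
  · ring

variable [IsDomain A] [Module.IsTorsionFree A M]

theorem eq_zero_of_smul_add_smul_succ_eq_zero {f : ℕ → M} {b c : ℕ → A} (h₀ : f 0 = 0)
    (hf : ∀ k, b k • f k + c k • f (k + 1) = 0) {n : ℕ} (hc : ∀ k < n, c k ≠ 0) : f n = 0 := by
  induction n with
  | zero => exact h₀
  | succ n ih =>
    have hn : f n = 0 := ih fun k hk => hc k (hk.trans n.lt_succ_self)
    have hsmul : c n • f (n + 1) = 0 := by simpa only [hn, smul_zero, zero_add] using hf n
    exact (smul_eq_zero.mp hsmul).resolve_left (hc n n.lt_succ_self)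

theorem CentralTermRelation.apply_sub_natCast_eq_zero {ℓ₁ ℓ₂ : A} {ζ : A → A → M}
    (hζ : CentralTermRelation ℓ₁ ℓ₂ ζ) (h₀ : ζ ℓ₂ ℓ₂ = 0) {n : ℕ}
    (hn : ∀ k < n, ℓ₁ + 2 * ℓ₂ ≠ k) : ζ (ℓ₂ - n) ℓ₂ = 0 :=
  eq_zero_of_smul_add_smul_succ_eq_zero (f := fun k => ζ (ℓ₂ - k) ℓ₂) (by simpa using h₀)
    hζ.succ_smul_add_smul_eq_zero fun k hk => sub_ne_zero.mpr (hn k hk)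

end Domain

section Ordered

variable {A M : Type*} [CommRing A] [LinearOrder A] [IsStrictOrderedRing A]

theorem exists_eq_sub_natCast_of_mem_intCoset_of_le {a x : A} (hx : x ∈ intCoset a)
    (hxa : x ≤ a) : ∃ k : ℕ, x = a - k := by
  obtain ⟨n, rfl⟩ := hx
  have hn : n ≤ 0 := by exact_mod_cast add_le_iff_nonpos_left.mp hxa
  obtain ⟨k, rfl⟩ := Int.exists_eq_neg_ofNat hn
  exact ⟨k, by push_cast; ring⟩

theorem zeta_antisym_vanishes_in_range_general [AddCommGroup M] [Module A M]
    [Module.IsTorsionFree A M] {ℓ₁ ℓ₂ : A} {ζ : A → A → M}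
    (hζ : CentralTermRelation ℓ₁ ℓ₂ ζ) (h₀ : ζ ℓ₂ ℓ₂ = 0) {u : A} (hu : u ∈ intCoset ℓ₂)
    (hlower : -ℓ₁ - ℓ₂ ≤ u) (hupper : u ≤ ℓ₂) : ζ u ℓ₂ = 0 := by
  obtain ⟨n, rfl⟩ := exists_eq_sub_natCast_of_mem_intCoset_of_le hu hupper
  refine hζ.apply_sub_natCast_eq_zero h₀ fun k hk => ne_of_gt ?_
  calc (k : A) < n := Nat.cast_lt.mpr hk
    _ ≤ ℓ₁ + 2 * ℓ₂ := by linarith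

end Ordered

/-- Let `ℓ₁` be a nonnegative integer and `ℓ₂` a nonnegative half-integer.
If `ζ : (ℤ+ℓ₂)×(ℤ+ℓ₂) → ℂ` is antisymmetric and satisfies relation (R):
`(mℓ₂ − u)ζ(m+u, v) + (mℓ₂ − v)ζ(u, m+v) + (mℓ₁ + m + u + v)ζ(u, v) = 0`,
then `ζ(u, ℓ₂) = 0` for every `u ∈ ℤ+ℓ₂` with `−ℓ₁−ℓ₂ ≤ u ≤ ℓ₂`. -/
theorem zeta_antisym_vanishes_in_range (ℓ₁ : ℕ) (ℓ₂ : ℚ)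
    (hhalf : ∃ k : ℕ, 2 * ℓ₂ = (k : ℚ))
    (ζ : ℚ → ℚ → ℂ)
    (hanti : ∀ u v : ℚ, (∃ n : ℤ, u = (n : ℚ) + ℓ₂) → (∃ n : ℤ, v = (n : ℚ) + ℓ₂) →
      ζ u v = - ζ v u)
    (hR : ∀ (m : ℤ) (u v : ℚ), (∃ n : ℤ, u = (n : ℚ) + ℓ₂) → (∃ n : ℤ, v = (n : ℚ) + ℓ₂) →
      ((m : ℂ) * (ℓ₂ : ℂ) - (u : ℂ)) * ζ ((m : ℚ) + u) v
      + ((m : ℂ) * (ℓ₂ : ℂ) - (v : ℂ)) * ζ u ((m : ℚ) + v)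
      + ((m : ℂ) * (ℓ₁ : ℂ) + (m : ℂ) + (u : ℂ) + (v : ℂ)) * ζ u v = 0) :
    ∀ u : ℚ, (∃ n : ℤ, u = (n : ℚ) + ℓ₂) → -(ℓ₁ : ℚ) - ℓ₂ ≤ u → u ≤ ℓ₂ →
      ζ u ℓ₂ = 0 := by
  have hζ : CentralTermRelation (ℓ₁ : ℚ) ℓ₂ ζ := by
    simpa [CentralTermRelation, intCoset, Rat.smul_def] using hR
  have h₀ : ζ ℓ₂ ℓ₂ = 0 :=
    self_eq_neg.mp (hanti ℓ₂ ℓ₂ (self_mem_intCoset ℓ₂) (self_mem_intCoset ℓ₂))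
  exact fun u hu => zeta_antisym_vanishes_in_range_general hζ h₀ hu
end

section
/- Fix a nonnegative integer ℓ₁ and a nonnegative half-integer ℓ₂, and set ℓ̄ = ℓ₁ + 2ℓ₂. If ζ : (ℤ+ℓ₂)×(ℤ+ℓ₂) → ℂ is antisymmetric and satisfies relation (R), then for every u ∈ ℤ+ℓ₂ with u ≥ ℓ₂+1 one has ζ(u, ℓ₂) = [(u+ℓ₁+ℓ₂)! / ((ℓ̄+1)!·(u−ℓ₂−1)!)]·ζ(ℓ₂+1, ℓ₂), and for every u ∈ ℤ−ℓ₂ with u ≥ ℓ₁+ℓ₂+1 one has ζ(−u, ℓ₂) = [(u+ℓ₂)! / ((ℓ̄+1)!·(u−ℓ₁−ℓ₂−1)!)]·ζ(−ℓ₁−ℓ₂−1, ℓ₂). (All factorial arguments are nonnegative integers.) -/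
/-!
At `m = 1`, `v = ℓ₂` the middle term of (R) vanishes, so `g n = ζ(n + ℓ₂, ℓ₂)` satisfies
`n g(n + 1) = (b + n) g(n)` for all integers `n`, where `b = ℓ₁ + 2ℓ₂ + 1`. Starting from `g 1`,
this is the recurrence of the binomial coefficients `(b + n).choose b`. It is invariant under the
reflection `n ↦ 1 - b - n`, which exchanges the two half-lines `n ≥ 1` and `n ≤ -b`, so the second
formula is the reflection of the first.
-/

/-- The two-sided recurrence `n g(n + 1) = (b + n) g(n)`, satisfied over the natural numbers by
`g (n + 1) = (b + n).choose b`. It is imposed on all integers so as to be stable under the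
reflection `n ↦ 1 - b - n`. -/
def BinomialRecurrence {M : Type*} [AddCommGroup M] (b : ℤ) (g : ℤ → M) : Prop :=
  ∀ n : ℤ, n • g (n + 1) = (b + n) • g n

namespace BinomialRecurrence

variable {M : Type*} [AddCommGroup M]

theorem comp_reflection {b : ℤ} {g : ℤ → M} (hg : BinomialRecurrence b g) :
    BinomialRecurrence b fun n => g (1 - b - n) := by
  intro n
  have h := hg (-b - n)
  rw [show -b - n + 1 = 1 - b - n by ring, show b + (-b - n) = -n by ring,
    show -b - n = -(b + n) by ring, neg_smul, neg_smul, neg_inj] at h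
  change n • g (1 - b - (n + 1)) = (b + n) • g (1 - b - n)
  rw [h, show 1 - b - (n + 1) = -(b + n) by ring]

variable [IsAddTorsionFree M] {b : ℕ} {g : ℤ → M}

theorem apply_add_one (hg : BinomialRecurrence b g) (n : ℕ) :
    g (n + 1) = (b + n).choose b • g 1 := by
  induction n with
  | zero => simp
  | succ n ih =>
    have choose_step : (b + n + 1) * (b + n).choose b = (n + 1) * (b + (n + 1)).choose b := by
      have h := Nat.choose_mul_succ_eq (b + n) b
      rw [show b + n + 1 - b = n + 1 by lia] at h
      rw [mul_comm, h, mul_comm, add_assoc]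
    refine nsmul_right_injective n.succ_ne_zero ?_
    calc (n + 1) • g ((n + 1 : ℕ) + 1)
        = (b + n + 1) • g (n + 1) := by
          have h := hg (n + 1)
          rw [← add_assoc] at h
          exact_mod_cast h
      _ = (n + 1) • (b + (n + 1)).choose b • g 1 := by
          rw [ih, ← mul_nsmul', choose_step, mul_nsmul']

theorem apply_neg_sub (hg : BinomialRecurrence b g) (n : ℕ) :
    g (-b - n) = (b + n).choose b • g (-b) := by
  have h := hg.comp_reflection.apply_add_one n
  rwa [show 1 - (b : ℤ) - (n + 1) = -b - n by ring, show 1 - (b : ℤ) - 1 = -b by ring] at h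

end BinomialRecurrence

section

variable {V : Type*} [AddCommGroup V] [Module ℚ V]

theorem binomialRecurrence_of_relation {ℓ₁ ℓ₂ : ℚ} {f : ℚ → V} {b : ℤ}
    (hb : (b : ℚ) = ℓ₁ + 2 * ℓ₂ + 1)
    (hf : ∀ n : ℤ, (ℓ₂ - (n + ℓ₂)) • f (1 + (n + ℓ₂)) + (ℓ₁ + 1 + (n + ℓ₂) + ℓ₂) • f (n + ℓ₂) = 0) :
    BinomialRecurrence b fun n => f (n + ℓ₂) := by
  intro n
  have h := hf n
  rw [show ℓ₂ - (n + ℓ₂) = -(n : ℚ) by ring, neg_smul, neg_add_eq_zero,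
    show 1 + (n + ℓ₂) = ((n + 1 : ℤ) : ℚ) + ℓ₂ by push_cast; ring,
    show ℓ₁ + 1 + (n + ℓ₂) + ℓ₂ = ((b + n : ℤ) : ℚ) by push_cast; linear_combination -hb] at h
  simpa only [Int.cast_smul_eq_zsmul] using h

theorem add_choose_nsmul_eq_factorial_div_smul (b n : ℕ) (x : V) :
    (b + n).choose b • x = ((b + n).factorial / (b.factorial * n.factorial) : ℚ) • x := by
  rw [← Nat.cast_add_choose, Nat.cast_smul_eq_nsmul]

-- `f u` plays the role of `ζ(u, ℓ₂)`, and `hf` is (R) at `m = 1`, `v = ℓ₂`.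
theorem zeta_antisym_factorial_formula_general (ℓ₁ ℓ₂ : ℚ) (f : ℚ → V)
    (hf : ∀ n : ℤ, (ℓ₂ - (n + ℓ₂)) • f (1 + (n + ℓ₂)) + (ℓ₁ + 1 + (n + ℓ₂) + ℓ₂) • f (n + ℓ₂) = 0)
    (u : ℚ) (A B C : ℕ) (hB : (B : ℚ) = ℓ₁ + 2 * ℓ₂ + 1) :
    ((A : ℚ) = u + ℓ₁ + ℓ₂ → (C : ℚ) = u - ℓ₂ - 1 →
      f u = (A.factorial / (B.factorial * C.factorial) : ℚ) • f (ℓ₂ + 1))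
    ∧ ((A : ℚ) = u + ℓ₂ → (C : ℚ) = u - ℓ₁ - ℓ₂ - 1 →
      f (-u) = (A.factorial / (B.factorial * C.factorial) : ℚ) • f (-ℓ₁ - ℓ₂ - 1)) := by
  have : IsAddTorsionFree V := .of_module_rat V
  have hrec : BinomialRecurrence B fun n => f (n + ℓ₂) :=
    binomialRecurrence_of_relation (mod_cast hB) hf
  constructor <;> intro hA hC
  · obtain rfl : A = B + C := by
      qify
      linarith
    have hu : f u = (B + C).choose B • f (ℓ₂ + 1) := by
      convert hrec.apply_add_one C using 3 <;> push_cast <;> linarith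
    rw [hu, add_choose_nsmul_eq_factorial_div_smul]
  · obtain rfl : A = B + C := by
      qify
      linarith
    have hu : f (-u) = (B + C).choose B • f (-ℓ₁ - ℓ₂ - 1) := by
      convert hrec.apply_neg_sub C using 3 <;> push_cast <;> linarith
    rw [hu, add_choose_nsmul_eq_factorial_div_smul]

end

/-- Let `ℓ₁` be a nonnegative integer, `ℓ₂` a nonnegative half-integer,
`ℓ̄ = ℓ₁ + 2ℓ₂`. If `ζ` is antisymmetric on `(ℤ+ℓ₂)×(ℤ+ℓ₂)` and satisfies relation (R),
then for `u ∈ ℤ+ℓ₂` with `u ≥ ℓ₂+1`: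
`ζ(u, ℓ₂) = (u+ℓ₁+ℓ₂)! / ((ℓ̄+1)!(u−ℓ₂−1)!) · ζ(ℓ₂+1, ℓ₂)`,
and for `u ∈ ℤ−ℓ₂` with `u ≥ ℓ₁+ℓ₂+1`:
`ζ(−u, ℓ₂) = (u+ℓ₂)! / ((ℓ̄+1)!(u−ℓ₁−ℓ₂−1)!) · ζ(−ℓ₁−ℓ₂−1, ℓ₂)`.
The factorial arguments, being nonnegative integers, are represented by naturals
`A`, `B`, `C` equal (as rationals) to the indicated quantities. -/
theorem zeta_antisym_factorial_formula (ℓ₁ : ℕ) (ℓ₂ : ℚ)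
    (hhalf : ∃ k : ℕ, 2 * ℓ₂ = (k : ℚ))
    (ζ : ℚ → ℚ → ℂ)
    (hanti : ∀ u v : ℚ, (∃ n : ℤ, u = (n : ℚ) + ℓ₂) → (∃ n : ℤ, v = (n : ℚ) + ℓ₂) →
      ζ u v = - ζ v u)
    (hR : ∀ (m : ℤ) (u v : ℚ), (∃ n : ℤ, u = (n : ℚ) + ℓ₂) → (∃ n : ℤ, v = (n : ℚ) + ℓ₂) →
      ((m : ℂ) * (ℓ₂ : ℂ) - (u : ℂ)) * ζ ((m : ℚ) + u) v
      + ((m : ℂ) * (ℓ₂ : ℂ) - (v : ℂ)) * ζ u ((m : ℚ) + v)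
      + ((m : ℂ) * (ℓ₁ : ℂ) + (m : ℂ) + (u : ℂ) + (v : ℂ)) * ζ u v = 0) :
    (∀ u : ℚ, (∃ n : ℤ, u = (n : ℚ) + ℓ₂) → ℓ₂ + 1 ≤ u →
      ∀ A B C : ℕ, (A : ℚ) = u + (ℓ₁ : ℚ) + ℓ₂ → (B : ℚ) = ((ℓ₁ : ℚ) + 2 * ℓ₂) + 1 →
        (C : ℚ) = u - ℓ₂ - 1 →
        ζ u ℓ₂ = ((Nat.factorial A : ℂ) / ((Nat.factorial B : ℂ) * (Nat.factorial C : ℂ)))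
          * ζ (ℓ₂ + 1) ℓ₂)
    ∧ (∀ u : ℚ, (∃ n : ℤ, u = (n : ℚ) - ℓ₂) → (ℓ₁ : ℚ) + ℓ₂ + 1 ≤ u →
      ∀ A B C : ℕ, (A : ℚ) = u + ℓ₂ → (B : ℚ) = ((ℓ₁ : ℚ) + 2 * ℓ₂) + 1 →
        (C : ℚ) = u - (ℓ₁ : ℚ) - ℓ₂ - 1 →
        ζ (-u) ℓ₂ = ((Nat.factorial A : ℂ) / ((Nat.factorial B : ℂ) * (Nat.factorial C : ℂ)))
          * ζ (-(ℓ₁ : ℚ) - ℓ₂ - 1) ℓ₂) := by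
  have h := zeta_antisym_factorial_formula_general ℓ₁ ℓ₂ (ζ · ℓ₂) fun n => by
    simpa [Rat.smul_def] using hR 1 (n + ℓ₂) ℓ₂ ⟨n, rfl⟩ ⟨0, by simp⟩
  exact ⟨fun u _ _ A B C hA hB hC => by simpa [Rat.smul_def] using (h u A B C hB).1 hA hC,
    fun u _ _ A B C hA hB hC => by simpa [Rat.smul_def] using (h u A B C hB).2 hA hC⟩
end

section
/- Let ℓ₁ = 0 and ℓ₂ = 1/2. If ζ : (ℤ+1/2)×(ℤ+1/2) → ℂ is antisymmetric and satisfies relation (R), then ζ(u, v) = ½·(u² − v²)·ζ(3/2, 1/2) for all u, v ∈ ℤ+1/2. -/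
/-!
Relation (R) is linear in `ζ`, and `u² - v²` satisfies it for `(ℓ₁, ℓ₂) = (0, 1/2)`, so it suffices
that a solution with `ζ(3/2, 1/2) = 0` vanishes. Taking `u = 1/2` in (R) expresses every value of
`ζ` off the row `3/2` through the row `1/2`, and a further instance of (R) expresses the row `3/2`
through the others. The row `1/2` obeys the two-term recurrence
`(v - 1/2) ζ(1/2, v + 1) = (v + 3/2) ζ(1/2, v)`. The recurrence degenerates at `v = 1/2` and
`v = -3/2`, which forces `ζ(1/2, ±1/2) = 0` and leaves one free value on each side, `ζ(1/2, 3/2)`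
and `ζ(1/2, -3/2)`; finitely many instances of (R) tie both to `ζ(3/2, 1/2)`.
-/

section CocycleSpace

variable {K M : Type*} [Field K] [AddCommGroup M] [Module K M]

variable (M) in
/-- The solutions of relation (R), indexed by integers: `g n k` stands for `ζ(n + ℓ₂, k + ℓ₂)`. -/
def cocycleSpace (ℓ₁ ℓ₂ : K) : Submodule K (ℤ → ℤ → M) where
  carrier := {g | ∀ m n k : ℤ,
    (m * ℓ₂ - (n + ℓ₂)) • g (m + n) k + (m * ℓ₂ - (k + ℓ₂)) • g n (m + k)
      + (m * ℓ₁ + m + (n + ℓ₂) + (k + ℓ₂)) • g n k = 0}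
  zero_mem' := by simp
  add_mem' {g h} hg hh m n k := by
    simp only [Pi.add_apply]
    linear_combination (norm := module) hg m n k + hh m n k
  smul_mem' c g hg m n k := by
    simp only [Pi.smul_apply]
    linear_combination (norm := module) c • hg m n k

namespace cocycleSpace

variable {ℓ₁ ℓ₂ : K} {g : ℤ → ℤ → M}

theorem row_zero_recurrence (hg : g ∈ cocycleSpace M ℓ₁ ℓ₂) (k : ℤ) :
    (k : K) • g 0 (k + 1) = (ℓ₁ + 1 + k + 2 * ℓ₂) • g 0 k := by
  have h := hg 1 0 k
  rw [add_comm 1 k] at h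
  push_cast at h
  linear_combination (norm := module) -h

theorem apply_zero_zero (hg : g ∈ cocycleSpace M ℓ₁ ℓ₂) (hℓ : ℓ₁ + 1 + 2 * ℓ₂ ≠ 0) :
    g 0 0 = 0 := by
  have h : (ℓ₁ + 1 + 2 * ℓ₂) • g 0 0 = 0 := by
    simpa using (row_zero_recurrence hg 0).symm
  exact (smul_eq_zero_iff_right hℓ).1 h

variable [CharZero K]

theorem apply_zero_right_eq_neg (hg : g ∈ cocycleSpace M ℓ₁ ℓ₂) (hℓ₂ : ℓ₂ ≠ 0)
    (h00 : g 0 0 = 0) {k : ℤ} (hk : k ≠ 1) : g k 0 = -g 0 k := by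
  have hk' : (k : K) - 1 ≠ 0 := sub_ne_zero.2 (mod_cast hk)
  have h : (((k : K) - 1) * ℓ₂) • (g k 0 + g 0 k) = 0 := by
    have h := hg k 0 0
    simp only [h00, add_zero, Int.cast_zero] at h
    linear_combination (norm := module) h
  exact eq_neg_of_add_eq_zero_left ((smul_eq_zero_iff_right (mul_ne_zero hk' hℓ₂)).1 h)

theorem eq_zero_of_row_zero (hg : g ∈ cocycleSpace M ℓ₁ ℓ₂) (hℓ₂ : ℓ₂ ≠ 0) (hℓ₂' : ℓ₂ ≠ -1)
    (hrow : ∀ k, g 0 k = 0) : g = 0 := by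
  have eq_zero_off_row_one (n k : ℤ) (hn : n ≠ 1) : g n k = 0 := by
    have h : (((n : K) - 1) * ℓ₂) • g n k = 0 := by
      simpa [hrow, sub_mul] using hg n 0 k
    have hn' : (n : K) - 1 ≠ 0 := sub_ne_zero.2 (mod_cast hn)
    exact (smul_eq_zero_iff_right (mul_ne_zero hn' hℓ₂)).1 h
  have hℓ₂_add_one : ℓ₂ + 1 ≠ 0 := mt eq_neg_of_add_eq_zero_left hℓ₂'
  have eq_zero_on_row_one (k : ℤ) : g 1 k = 0 := by
    have h : (-2 * (ℓ₂ + 1)) • g 1 k = 0 := by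
      have h := hg (-1) 2 k
      rw [eq_zero_off_row_one 2 _ (by decide), eq_zero_off_row_one 2 _ (by decide),
        show (-1 + 2 : ℤ) = 1 from rfl] at h
      push_cast at h
      linear_combination (norm := module) h
    exact (smul_eq_zero_iff_right (mul_ne_zero (by norm_num) hℓ₂_add_one)).1 h
  ext n k
  obtain rfl | hn := eq_or_ne n 1
  exacts [eq_zero_on_row_one k, eq_zero_off_row_one n k hn]

namespace ZeroHalf

theorem sq_sub_sq_smul_mem (c : M) :
    (fun n k : ℤ ↦ (((n : K) + 1 / 2) ^ 2 - ((k : K) + 1 / 2) ^ 2) • c) ∈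
      cocycleSpace M (0 : K) (1 / 2) := by
  intro m n k
  push_cast
  module

theorem row_zero_recurrence (hg : g ∈ cocycleSpace M (0 : K) (1 / 2)) (k : ℤ) :
    (k : K) • g 0 (k + 1) = ((k : K) + 2) • g 0 k := by
  linear_combination (norm := module) cocycleSpace.row_zero_recurrence hg k

theorem apply_zero_zero (hg : g ∈ cocycleSpace M (0 : K) (1 / 2)) : g 0 0 = 0 :=
  cocycleSpace.apply_zero_zero hg (by norm_num)

theorem apply_zero_neg_one (hg : g ∈ cocycleSpace M (0 : K) (1 / 2)) : g 0 (-1) = 0 := by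
  simpa using row_zero_recurrence hg (-2)

theorem apply_zero_two (hg : g ∈ cocycleSpace M (0 : K) (1 / 2)) :
    g 0 2 = (3 : K) • g 0 1 := by
  have h : (1 : K) • g 0 2 = ((1 : K) + 2) • g 0 1 := by
    simpa only [Int.cast_one, Int.reduceAdd] using row_zero_recurrence hg 1
  linear_combination (norm := module) h

theorem apply_two_zero (hg : g ∈ cocycleSpace M (0 : K) (1 / 2)) :
    g 2 0 = (3 : K) • g 1 0 := by
  have h : -g 2 0 + (3 : K) • g 1 0 = 0 :=
    Eq.trans (by norm_num) (hg 1 1 0)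
  linear_combination (norm := module) -h

theorem apply_zero_one (hg : g ∈ cocycleSpace M (0 : K) (1 / 2)) : g 0 1 = -g 1 0 := by
  have h : g 2 0 = -g 0 2 :=
    apply_zero_right_eq_neg hg (by norm_num) (apply_zero_zero hg) (by decide)
  rw [apply_two_zero hg, apply_zero_two hg] at h
  linear_combination (norm := module) (1 / 3 : K) • h

theorem apply_zero_neg_two (hg : g ∈ cocycleSpace M (0 : K) (1 / 2)) : g 0 (-2) = g 0 1 := by
  have from_row : g (-2) 2 = (2 : K) • g 0 1 := by
    have h : (-(3 / 2) : K) • g (-2) 2 + g 0 2 = 0 :=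
      Eq.trans (by norm_num [apply_zero_zero hg]) (hg (-2) 0 2)
    rw [apply_zero_two hg] at h
    linear_combination (norm := module) (-2 / 3 : K) • h
  have from_column : g (-2) 2 = (2 : K) • g 0 (-2) := by
    have h : (1 / 2 : K) • g (-2) 2 + g (-2) 0 = 0 :=
      Eq.trans (by norm_num [apply_zero_zero hg]) (hg 2 (-2) 0)
    rw [apply_zero_right_eq_neg hg (by norm_num) (apply_zero_zero hg) (by decide)] at h
    linear_combination (norm := module) (2 : K) • h
  linear_combination (norm := module) (1 / 2 : K) • (from_row - from_column)

theorem row_zero_eq_zero (hg : g ∈ cocycleSpace M (0 : K) (1 / 2)) (h10 : g 1 0 = 0) (k : ℤ) :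
    g 0 k = 0 := by
  have h01 : g 0 1 = 0 := by rw [apply_zero_one hg, h10, neg_zero]
  have h_right (k : ℤ) (hk : 1 ≤ k) : g 0 k = 0 := by
    induction k, hk using Int.leInduction with
    | base => exact h01
    | succ k hk ih =>
      have hk' : (k : K) ≠ 0 := by exact_mod_cast (by lia : k ≠ 0)
      simpa [ih, hk'] using row_zero_recurrence hg k
  have h_left (k : ℤ) (hk : k ≤ -2) : g 0 k = 0 := by
    induction k, hk using Int.leInductionDown with
    | base => exact (apply_zero_neg_two hg).trans h01
    | pred k hk ih =>
      have hk' : (k : K) + 1 ≠ 0 := by exact_mod_cast (by lia : k + 1 ≠ 0)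
      have h := row_zero_recurrence hg (k - 1)
      rw [sub_add_cancel, ih, smul_zero, Int.cast_sub, Int.cast_one] at h
      exact (smul_eq_zero_iff_right hk').1 (by linear_combination (norm := module) -h)
  obtain hk | rfl | rfl | hk : k ≤ -2 ∨ k = -1 ∨ k = 0 ∨ 1 ≤ k := by lia
  exacts [h_left k hk, apply_zero_neg_one hg, apply_zero_zero hg, h_right k hk]

theorem eq_sq_sub_sq_smul (hg : g ∈ cocycleSpace M (0 : K) (1 / 2)) (n k : ℤ) :
    g n k = (1 / 2 * (((n : K) + 1 / 2) ^ 2 - ((k : K) + 1 / 2) ^ 2)) • g 1 0 := by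
  have hd := sub_mem hg (sq_sub_sq_smul_mem ((1 / 2 : K) • g 1 0))
  have hd_eq_zero := eq_zero_of_row_zero hd (by norm_num) (by norm_num) <|
    row_zero_eq_zero hd <| by
      simp only [Pi.sub_apply, Int.cast_one, Int.cast_zero]
      module
  rw [congr_fun₂ (sub_eq_zero.1 hd_eq_zero) n k]
  module

end ZeroHalf

end cocycleSpace

end CocycleSpace

theorem zeta_antisym_ell_zero_half_general {M : Type*} [AddCommGroup M] [Module ℚ M]
    (ζ : ℚ → ℚ → M)
    (hR : ∀ (m : ℤ) (u v : ℚ),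
      (∃ n : ℤ, u = (n : ℚ) + 1 / 2) → (∃ n : ℤ, v = (n : ℚ) + 1 / 2) →
      ((m : ℚ) * (1 / 2) - u) • ζ (m + u) v
      + ((m : ℚ) * (1 / 2) - v) • ζ u (m + v)
      + ((m : ℚ) + u + v) • ζ u v = 0) :
    ∀ u v : ℚ, (∃ n : ℤ, u = (n : ℚ) + 1 / 2) → (∃ n : ℤ, v = (n : ℚ) + 1 / 2) →
      ζ u v = (1 / 2 * (u ^ 2 - v ^ 2)) • ζ (3 / 2) (1 / 2) := by
  rintro _ _ ⟨n, rfl⟩ ⟨k, rfl⟩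
  have hg : (fun n k : ℤ ↦ ζ (n + 1 / 2) (k + 1 / 2)) ∈ cocycleSpace M (0 : ℚ) (1 / 2) := by
    intro m n k
    simpa [add_assoc] using hR m _ _ ⟨n, rfl⟩ ⟨k, rfl⟩
  convert cocycleSpace.ZeroHalf.eq_sq_sub_sq_smul hg n k using 3 <;> norm_num

/-- Let `ℓ₁ = 0` and `ℓ₂ = 1/2`. If `ζ : (ℤ+1/2)×(ℤ+1/2) → ℂ` is
antisymmetric and satisfies relation (R), then
`ζ(u, v) = ½(u² − v²)·ζ(3/2, 1/2)` for all half-integers `u, v`. -/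
theorem zeta_antisym_ell_zero_half (ζ : ℚ → ℚ → ℂ)
    (hanti : ∀ u v : ℚ, (∃ n : ℤ, u = (n : ℚ) + 1 / 2) → (∃ n : ℤ, v = (n : ℚ) + 1 / 2) →
      ζ u v = - ζ v u)
    (hR : ∀ (m : ℤ) (u v : ℚ),
      (∃ n : ℤ, u = (n : ℚ) + 1 / 2) → (∃ n : ℤ, v = (n : ℚ) + 1 / 2) →
      ((m : ℂ) * (1 / 2) - (u : ℂ)) * ζ ((m : ℚ) + u) v
      + ((m : ℂ) * (1 / 2) - (v : ℂ)) * ζ u ((m : ℚ) + v)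
      + ((m : ℂ) + (u : ℂ) + (v : ℂ)) * ζ u v = 0) :
    ∀ u v : ℚ, (∃ n : ℤ, u = (n : ℚ) + 1 / 2) → (∃ n : ℤ, v = (n : ℚ) + 1 / 2) →
      ζ u v = (1 / 2) * ((u : ℂ) ^ 2 - (v : ℂ) ^ 2) * ζ (3 / 2) (1 / 2) := by
  simpa [Rat.smul_def] using
    zeta_antisym_ell_zero_half_general ζ (by simpa [Rat.smul_def] using hR)
end

section
/- Let ℓ₁ = 0 and ℓ₂ = 0. If ζ : ℤ×ℤ → ℂ is antisymmetric and satisfies relation (R), i.e. −u·ζ(m+u, v) − v·ζ(u, m+v) + (m + u + v)·ζ(u, v) = 0 for all m, u, v ∈ ℤ, then ζ(u, v) = (u − v)·ζ(1, 0) for all u, v ∈ ℤ. -/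
/-!
Taking `m = -u` and `m = -v` in the relation, and evaluating on the axes, shows that the shears
`(u, v) ↦ (u, v - u)`, for `v ≠ 0`, and `(u, v) ↦ (u - v, v)`, for `u ≠ 0`, change `ζ` exactly as
they change the linear form `u • ζ 1 0 + v • ζ 0 1`. On the line `u = 1` the first shear reaches
every point from `(1, 0)`, except that it cannot cross from `(1, 0)` to `(1, -1)`; the detour
`(1, -1), (2, -1), (2, 1), (1, 1), (1, 0)` closes this gap. The relation at `(1, v)` then
recovers all values of `ζ` from those on that line.
-/

/-- The relation (R) on central extension terms for `ℓ₁ = ℓ₂ = 0`, with the negative terms moved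
to the other side and values in an arbitrary abelian group. -/
def JacobiRelation {M : Type*} [AddCommGroup M] (ζ : ℤ → ℤ → M) : Prop :=
  ∀ m u v : ℤ, u • ζ (m + u) v + v • ζ u (m + v) = (m + u + v) • ζ u v

namespace JacobiRelation

variable {M : Type*} [AddCommGroup M] {ζ : ℤ → ℤ → M}

theorem swap (h : JacobiRelation ζ) : JacobiRelation fun u v ↦ ζ v u := by
  intro m u v
  rw [add_comm, h m v u, add_right_comm]

theorem apply_zero_right (h : JacobiRelation ζ) (u : ℤ) : ζ u 0 = u • ζ 1 0 := by
  simpa using h (u - 1) 1 0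

theorem apply_zero_left (h : JacobiRelation ζ) (v : ℤ) : ζ 0 v = v • ζ 0 1 :=
  h.swap.apply_zero_right v

section IsAddTorsionFree

variable [IsAddTorsionFree M]

theorem apply_eq_apply_sub_right_add (h : JacobiRelation ζ) (u : ℤ) {v : ℤ} (hv : v ≠ 0) :
    ζ u v = ζ u (v - u) + u • ζ 0 1 := by
  apply zsmul_right_injective hv
  have shear : u • ζ 0 v + v • ζ u (v - u) = v • ζ u v := by
    simpa [neg_add_eq_sub] using h (-u) u v
  rw [h.apply_zero_left] at shear
  linear_combination (norm := module) -shear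

theorem apply_eq_apply_sub_left_add (h : JacobiRelation ζ) {u : ℤ} (hu : u ≠ 0) (v : ℤ) :
    ζ u v = ζ (u - v) v + v • ζ 1 0 :=
  h.swap.apply_eq_apply_sub_right_add v hu

theorem apply_one_neg_one (h : JacobiRelation ζ) : ζ 1 (-1) = ζ 1 0 - ζ 0 1 := by
  have left_shear_one_neg_one : ζ 1 (-1) = ζ 2 (-1) - ζ 1 0 := by
    simpa [← sub_eq_add_neg] using h.apply_eq_apply_sub_left_add one_ne_zero (-1)
  have right_shear_two_one : ζ 2 1 = ζ 2 (-1) + (2 : ℤ) • ζ 0 1 :=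
    h.apply_eq_apply_sub_right_add 2 one_ne_zero
  have left_shear_two_one : ζ 2 1 = ζ 1 1 + ζ 1 0 := by
    simpa using h.apply_eq_apply_sub_left_add two_ne_zero 1
  have right_shear_one_one : ζ 1 1 = ζ 1 0 + ζ 0 1 := by
    simpa using h.apply_eq_apply_sub_right_add 1 one_ne_zero
  linear_combination (norm := module) left_shear_one_neg_one - right_shear_two_one
    + left_shear_two_one + right_shear_one_one

theorem apply_one_add_one (h : JacobiRelation ζ) (v : ℤ) : ζ 1 (v + 1) = ζ 1 v + ζ 0 1 := by
  obtain hv | hv := eq_or_ne (v + 1) 0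
  · obtain rfl : v = -1 := eq_neg_of_add_eq_zero_left hv
    rw [h.apply_one_neg_one, neg_add_cancel, sub_add_cancel]
  · simpa using h.apply_eq_apply_sub_right_add 1 hv

theorem apply_one_left (h : JacobiRelation ζ) (v : ℤ) : ζ 1 v = ζ 1 0 + v • ζ 0 1 := by
  induction v with
  | zero => simp
  | succ n ih => rw [h.apply_one_add_one, ih, add_one_zsmul, add_assoc]
  | pred n ih =>
    have step : ζ 1 (-n) = ζ 1 (-n - 1) + ζ 0 1 := by
      simpa using h.apply_one_add_one (-n - 1)
    rw [eq_sub_of_add_eq step.symm, ih, sub_one_zsmul, add_sub_assoc, sub_eq_add_neg (_ • _)]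

end IsAddTorsionFree

end JacobiRelation

theorem zeta_antisym_ell_zero_zero_general {M : Type*} [AddCommGroup M] [IsAddTorsionFree M]
    {ζ : ℤ → ℤ → M} (h : JacobiRelation ζ) (u v : ℤ) : ζ u v = u • ζ 1 0 + v • ζ 0 1 := by
  have expand : ζ u v + v • ζ 1 (u - 1 + v) = (u + v) • ζ 1 v := by
    simpa using h (u - 1) 1 v
  rw [h.apply_one_left (u - 1 + v), h.apply_one_left v] at expand
  linear_combination (norm := module) expand

/-- Let `ℓ₁ = 0` and `ℓ₂ = 0`. If `ζ : ℤ×ℤ → ℂ` is antisymmetric and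
satisfies `−u·ζ(m+u, v) − v·ζ(u, m+v) + (m + u + v)·ζ(u, v) = 0` for all `m, u, v ∈ ℤ`,
then `ζ(u, v) = (u − v)·ζ(1, 0)` for all `u, v ∈ ℤ`. -/
theorem zeta_antisym_ell_zero_zero (ζ : ℤ → ℤ → ℂ)
    (hanti : ∀ u v : ℤ, ζ u v = - ζ v u)
    (hR : ∀ m u v : ℤ,
      -(u : ℂ) * ζ (m + u) v - (v : ℂ) * ζ u (m + v)
      + ((m : ℂ) + (u : ℂ) + (v : ℂ)) * ζ u v = 0) :
    ∀ u v : ℤ, ζ u v = ((u : ℂ) - (v : ℂ)) * ζ 1 0 := by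
  have h : JacobiRelation ζ := fun m u v ↦ by
    push_cast [zsmul_eq_mul]
    linear_combination -hR m u v
  intro u v
  rw [zeta_antisym_ell_zero_zero_general h, hanti 0 1, zsmul_eq_mul, zsmul_eq_mul]
  ring
end

section
/- Let ℓ₁ = 0 and ℓ₂ = 0. If ζ : ℤ×ℤ → ℂ is symmetric and satisfies relation (R), i.e. −u·ζ(m+u, v) − v·ζ(u, m+v) + (m + u + v)·ζ(u, v) = 0 for all m, u, v ∈ ℤ, then ζ(u, v) = (u + v)·ζ(1, 0) for all u, v ∈ ℤ. -/
/-!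
Subtracting the solution `u • ζ 1 0 + v • ζ 0 1` of relation (R), one may assume that
`ζ 1 0 = ζ 0 1 = 0`. Relation (R) at `u = 1` expresses `ζ` through its row `ζ 1 ·`, and at `v = 1`
through its column `ζ · 1`, which is the negative of that row. Comparing the two expressions on
the antidiagonals `u + v = 1` and `u + v = -1` gives two reflections of the row, which compose to
`ζ 1 (u + 2) = ζ 1 u - ζ 1 (-2)`. Since `2 • ζ 1 (-2) = 0`, the row has period `2` when there is
no `2`-torsion, so it vanishes together with `ζ 1 0` and `ζ 1 1`.
-/

variable {M : Type*} [AddCommGroup M]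

/-- Relation (R) for `ℓ₁ = ℓ₂ = 0`, for functions with values in an arbitrary abelian group. The
terms with a negative sign are moved to the right-hand side. -/
def IsCentralTerm (ζ : ℤ → ℤ → M) : Prop :=
  ∀ m u v : ℤ, (m + u + v) • ζ u v = u • ζ (m + u) v + v • ζ u (m + v)

namespace IsCentralTerm

theorem smul_add_smul (a b : M) : IsCentralTerm fun u v ↦ u • a + v • b := by
  intro m u v
  module

variable {ζ ξ : ℤ → ℤ → M}

theorem sub (hζ : IsCentralTerm ζ) (hξ : IsCentralTerm ξ) :
    IsCentralTerm fun u v ↦ ζ u v - ξ u v := by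
  intro m u v
  linear_combination (norm := module) hζ m u v - hξ m u v

theorem swap (hζ : IsCentralTerm ζ) : IsCentralTerm fun u v ↦ ζ v u := by
  intro m u v
  rw [add_right_comm, hζ m v u, add_comm]

theorem eq_row (hζ : IsCentralTerm ζ) (u v : ℤ) :
    ζ u v = (u + v) • ζ 1 v - v • ζ 1 (u + v - 1) := by
  have h := hζ (u - 1) 1 v
  rw [sub_add_cancel, one_smul, sub_add_eq_add_sub] at h
  exact eq_sub_of_add_eq h.symm

theorem eq_column (hζ : IsCentralTerm ζ) (u v : ℤ) :
    ζ u v = (u + v) • ζ u 1 - u • ζ (u + v - 1) 1 := by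
  simpa only [add_comm v u] using hζ.swap.eq_row v u

theorem one_one (hζ : IsCentralTerm ζ) : ζ 1 1 = ζ 0 1 + ζ 1 0 := by
  simpa [eq_sub_iff_add_eq, eq_comm] using hζ.eq_row 0 1

theorem column_eq_neg_row (hζ : IsCentralTerm ζ) (h₁₀ : ζ 1 0 = 0) (h₀₁ : ζ 0 1 = 0) (u : ℤ) :
    ζ u 1 = -ζ 1 u := by
  simpa [hζ.one_one, h₁₀, h₀₁] using hζ.eq_row u 1

theorem row_one_sub (hζ : IsCentralTerm ζ) (h₁₀ : ζ 1 0 = 0) (h₀₁ : ζ 0 1 = 0) (u : ℤ) :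
    ζ 1 (1 - u) = -ζ 1 u := by
  have hrow : ζ u (1 - u) = ζ 1 (1 - u) := by simpa [h₁₀] using hζ.eq_row u (1 - u)
  have hcol : ζ u (1 - u) = ζ u 1 := by simpa [h₀₁] using hζ.eq_column u (1 - u)
  rw [← hrow, hcol, hζ.column_eq_neg_row h₁₀ h₀₁]

theorem row_neg_one_sub (hζ : IsCentralTerm ζ) (h₁₀ : ζ 1 0 = 0) (h₀₁ : ζ 0 1 = 0) (u : ℤ) :
    ζ 1 (-1 - u) = ζ 1 (-2) - ζ 1 u := by
  have hrow := hζ.eq_row u (-1 - u)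
  have hcol := hζ.eq_column u (-1 - u)
  rw [add_sub_cancel, show (-1 - 1 : ℤ) = -2 from rfl] at hrow hcol
  rw [hζ.column_eq_neg_row h₁₀ h₀₁, hζ.column_eq_neg_row h₁₀ h₀₁] at hcol
  linear_combination (norm := module) hrow - hcol

theorem row_add_two (hζ : IsCentralTerm ζ) (h₁₀ : ζ 1 0 = 0) (h₀₁ : ζ 0 1 = 0) (u : ℤ) :
    ζ 1 (u + 2) = ζ 1 u - ζ 1 (-2) := by
  calc ζ 1 (u + 2) = ζ 1 (1 - (-1 - u)) := by congr 1; ring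
    _ = ζ 1 u - ζ 1 (-2) := by
      rw [hζ.row_one_sub h₁₀ h₀₁, hζ.row_neg_one_sub h₁₀ h₀₁, neg_sub]

theorem two_smul_row_neg_two (hζ : IsCentralTerm ζ) (h₁₀ : ζ 1 0 = 0) (h₀₁ : ζ 0 1 = 0) :
    (2 : ℤ) • ζ 1 (-2) = 0 := by
  have hrow : ζ 0 2 = (2 : ℤ) • ζ 1 2 := by
    simpa [hζ.one_one, h₁₀, h₀₁] using hζ.eq_row 0 2
  have hcol : ζ 0 2 = 0 := by simpa [h₀₁] using hζ.eq_column 0 2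
  have hneg : ζ 1 2 = -ζ 1 (-2) := by simpa [h₁₀] using hζ.row_add_two h₁₀ h₀₁ 0
  rwa [hcol, hneg, smul_neg, zero_eq_neg] at hrow

theorem row_eq_zero (hζ : IsCentralTerm ζ) (h₁₀ : ζ 1 0 = 0) (h₀₁ : ζ 0 1 = 0)
    (hM : IsSMulRegular M (2 : ℤ)) (v : ℤ) : ζ 1 v = 0 := by
  have hneg_two : ζ 1 (-2) = 0 := hM.right_eq_zero_of_smul (hζ.two_smul_row_neg_two h₁₀ h₀₁)
  have hperiodic : Function.Periodic (ζ 1) 2 := fun u ↦ by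
    rw [hζ.row_add_two h₁₀ h₀₁, hneg_two, sub_zero]
  obtain ⟨k, rfl | rfl⟩ := v.even_or_odd'
  · simpa [mul_comm, h₁₀] using hperiodic.int_mul k 0
  · simpa [mul_comm, add_comm, hζ.one_one, h₁₀, h₀₁] using hperiodic.int_mul k 1

theorem eq_zero (hζ : IsCentralTerm ζ) (h₁₀ : ζ 1 0 = 0) (h₀₁ : ζ 0 1 = 0)
    (hM : IsSMulRegular M (2 : ℤ)) (u v : ℤ) : ζ u v = 0 := by
  rw [hζ.eq_row]
  simp only [hζ.row_eq_zero h₁₀ h₀₁ hM, smul_zero, sub_zero]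

end IsCentralTerm

theorem zeta_sym_ell_zero_zero_general {ζ : ℤ → ℤ → M} (hM : IsSMulRegular M (2 : ℤ))
    (hζ : IsCentralTerm ζ) (u v : ℤ) : ζ u v = u • ζ 1 0 + v • ζ 0 1 :=
  sub_eq_zero.mp <| (hζ.sub (.smul_add_smul (ζ 1 0) (ζ 0 1))).eq_zero (by simp) (by simp) hM u v

/-- Let `ℓ₁ = 0` and `ℓ₂ = 0`. If `ζ : ℤ×ℤ → ℂ` is symmetric and
satisfies `−u·ζ(m+u, v) − v·ζ(u, m+v) + (m + u + v)·ζ(u, v) = 0` for all `m, u, v ∈ ℤ`,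
then `ζ(u, v) = (u + v)·ζ(1, 0)` for all `u, v ∈ ℤ`. -/
theorem zeta_sym_ell_zero_zero (ζ : ℤ → ℤ → ℂ)
    (hsym : ∀ u v : ℤ, ζ u v = ζ v u)
    (hR : ∀ m u v : ℤ,
      -(u : ℂ) * ζ (m + u) v - (v : ℂ) * ζ u (m + v)
      + ((m : ℂ) + (u : ℂ) + (v : ℂ)) * ζ u v = 0) :
    ∀ u v : ℤ, ζ u v = ((u : ℂ) + (v : ℂ)) * ζ 1 0 := by
  have hζ : IsCentralTerm ζ := fun m u v ↦ by
    simp only [zsmul_eq_mul]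
    push_cast
    linear_combination hR m u v
  intro u v
  rw [zeta_sym_ell_zero_zero_general (.of_ne_zero two_ne_zero) hζ, hsym 0 1, ← add_smul,
    zsmul_eq_mul, Int.cast_add]
end

section
/- Let ℓ be a nonnegative integer. Suppose h : ℤ×ℤ → ℂ is symmetric (h(r,s) = h(s,r)) and satisfies both the cyclic identity h(r,s) + h(s,−r−s) + h(−r−s,r) = 0 for all r, s ∈ ℤ and the recurrence (mℓ − r)·h(m+r, s) + (mℓ − s)·h(r, m+s) + (mℓ + m + r + s)·h(r, s) = 0 for all m, r, s ∈ ℤ. Then: if ℓ ≠ 0, h(r,s) = 0 for all r, s; and if ℓ = 0, h(r,s) = (r + s)·h(1, 0) for all r, s. Equivalently, h(r,s) = δ_{ℓ,0}·(r+s)·c for some constant c ∈ ℂ. -/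
/-!
Write `d r = h r r`. For `r = s`, symmetry merges the first two terms of the recurrence and
expresses `2((n - r)ℓ - r) h(n, r)` through `d r`; exchanging `n` and `r` expresses another multiple
of the same value through `d n`. Eliminating `h(n, r)` leaves a relation between `d n` and `d r`
alone. The cyclic identity at the origin gives `d 0 = 0`, so for `n = 0` the relation reads
`r² ℓ (1 - ℓ) d r = 0`; for `ℓ = 1` the choices `n = 1` and `n = 3` replace it. Hence `d = 0` when
`ℓ ≠ 0`. Then both multiples of `h(n, r)` vanish, and so does their sum, which is proportional to
`(n + r) h(n, r)`; on the antidiagonal the recurrence with `m = 1` supplies the missing equation.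
For `ℓ = 0` the two expressions give `d r = 2 r h(1, 0)`, and from it the formula for `h`.
-/

/-- The constraints on the structure function of an extension `[P_{rs}, P_t] = δ_{r+s+t,0} h(r,s)`
given by symmetry and the Jacobi identities for `(L_m, P_{rs}, P_t)`. The parameter `ℓ` ranges over
the coefficient ring rather than over the nonnegative integers. -/
structure IsExtensionFunction {R : Type*} [CommRing R] (ℓ : R) (h : ℤ → ℤ → R) : Prop where
  symm : ∀ r s : ℤ, h r s = h s r
  recurrence : ∀ m r s : ℤ,
    ((m : R) * ℓ - (r : R)) * h (m + r) s + ((m : R) * ℓ - (s : R)) * h r (m + s)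
      + ((m : R) * ℓ + (m : R) + (r : R) + (s : R)) * h r s = 0

namespace IsExtensionFunction

section CommRing

variable {R : Type*} [CommRing R] {ℓ : R} {h : ℤ → ℤ → R}

theorem two_mul_apply_eq_diag (H : IsExtensionFunction ℓ h) (n r : ℤ) :
    2 * ((n - r) * ℓ - r) * h n r = -((n - r) * ℓ + n + r) * h r r := by
  have e := H.recurrence (n - r) r r
  rw [sub_add_cancel, H.symm r n] at e
  push_cast at e
  linear_combination e

theorem diag_mul_eq_diag_mul (H : IsExtensionFunction ℓ h) (n r : ℤ) :
    ((r - n) * ℓ - n) * ((n - r) * ℓ + n + r) * h r r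
      = ((n - r) * ℓ - r) * ((r - n) * ℓ + n + r) * h n n := by
  have hr := H.two_mul_apply_eq_diag n r
  have hn := H.two_mul_apply_eq_diag r n
  rw [H.symm r n] at hn
  linear_combination ((r - n) * ℓ - n) * hr - ((n - r) * ℓ - r) * hn

end CommRing

section NoZeroDivisors

variable {R : Type*} [CommRing R] [NoZeroDivisors R] [CharZero R] {ℓ : R} {h : ℤ → ℤ → R}

theorem mul_apply_eq_zero_of_diag_eq_zero (H : IsExtensionFunction ℓ h)
    (hd : ∀ r, h r r = 0) (n r : ℤ) : ((n - r) * ℓ - r) * h n r = 0 := by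
  have e := H.two_mul_apply_eq_diag n r
  rw [hd, mul_zero, mul_assoc] at e
  exact (mul_eq_zero.mp e).resolve_left two_ne_zero

theorem apply_eq_zero_of_diag_eq_zero_of_add_ne_zero (H : IsExtensionFunction ℓ h)
    (hd : ∀ r, h r r = 0) {n r : ℤ} (hnr : n + r ≠ 0) : h n r = 0 := by
  have hr := H.mul_apply_eq_zero_of_diag_eq_zero hd n r
  have hn := H.mul_apply_eq_zero_of_diag_eq_zero hd r n
  rw [H.symm r n] at hn
  have hsum : ((n + r : ℤ) : R) * h n r = 0 := by
    push_cast
    linear_combination -hr - hn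
  exact (mul_eq_zero.mp hsum).resolve_left (Int.cast_ne_zero.mpr hnr)

theorem apply_neg_eq_zero_of_diag_eq_zero (H : IsExtensionFunction ℓ h)
    (hd : ∀ r, h r r = 0) (n : ℤ) : h n (-n) = 0 := by
  rcases eq_or_ne n 0 with rfl | hn
  · exact hd 0
  have two_ell_add_one : (2 * ℓ + 1) * h n (-n) = 0 := by
    have e := H.mul_apply_eq_zero_of_diag_eq_zero hd n (-n)
    push_cast at e
    have hmul : (n : R) * ((2 * ℓ + 1) * h n (-n)) = 0 := by linear_combination e
    exact (mul_eq_zero.mp hmul).resolve_left (Int.cast_ne_zero.mpr hn)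
  have ell_add_one : (ℓ + 1) * h n (-n) = 0 := by
    have e := H.recurrence 1 n (-n)
    rw [H.apply_eq_zero_of_diag_eq_zero_of_add_ne_zero hd (n := 1 + n) (by omega),
      H.apply_eq_zero_of_diag_eq_zero_of_add_ne_zero hd (r := 1 + -n) (by omega)] at e
    push_cast at e
    linear_combination e
  linear_combination 2 * ell_add_one - two_ell_add_one

theorem eq_zero_of_diag_eq_zero (H : IsExtensionFunction ℓ h) (hd : ∀ r, h r r = 0) (n r : ℤ) :
    h n r = 0 := by
  by_cases hnr : n + r = 0
  · rw [eq_neg_of_add_eq_zero_right hnr]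
    exact H.apply_neg_eq_zero_of_diag_eq_zero hd n
  · exact H.apply_eq_zero_of_diag_eq_zero_of_add_ne_zero hd hnr

theorem diag_eq_zero_of_param_ne_zero_of_param_ne_one (H : IsExtensionFunction ℓ h)
    (h00 : h 0 0 = 0) (h0 : ℓ ≠ 0) (h1 : ℓ ≠ 1) (r : ℤ) : h r r = 0 := by
  rcases eq_or_ne r 0 with rfl | hr
  · exact h00
  have hmul : (r : R) ^ 2 * ℓ * (1 - ℓ) * h r r = 0 := by
    have e := H.diag_mul_eq_diag_mul 0 r
    rw [h00] at e
    push_cast at e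
    linear_combination e
  have hr' : (r : R) ≠ 0 := Int.cast_ne_zero.mpr hr
  exact (mul_eq_zero.mp hmul).resolve_left
    (mul_ne_zero (mul_ne_zero (pow_ne_zero 2 hr') h0) (sub_ne_zero.mpr h1.symm))

theorem diag_eq_zero_of_param_one (H : IsExtensionFunction (1 : R) h) (r : ℤ) : h r r = 0 := by
  have at_one : h 1 1 = 0 := by
    have e := H.diag_mul_eq_diag_mul 1 2
    norm_num at e
    exact e
  have of_ne_two {r : ℤ} (hr : r ≠ 2) : h r r = 0 := by
    have e := H.diag_mul_eq_diag_mul 1 r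
    rw [at_one] at e
    push_cast at e
    have hmul : 2 * ((r - 2 : R) * h r r) = 0 := by linear_combination e
    have hr' : (r - 2 : R) ≠ 0 := sub_ne_zero.mpr (by exact_mod_cast hr)
    exact (mul_eq_zero.mp ((mul_eq_zero.mp hmul).resolve_left two_ne_zero)).resolve_left hr'
  rcases eq_or_ne r 2 with rfl | hr
  · have e := H.diag_mul_eq_diag_mul 3 2
    rw [of_ne_two (r := 3) (by norm_num)] at e
    norm_num at e
    exact e
  · exact of_ne_two hr

theorem eq_zero_of_param_ne_zero (H : IsExtensionFunction ℓ h) (h00 : h 0 0 = 0) (h0 : ℓ ≠ 0)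
    (r s : ℤ) : h r s = 0 := by
  refine H.eq_zero_of_diag_eq_zero (fun n ↦ ?_) r s
  rcases eq_or_ne ℓ 1 with rfl | h1
  · exact H.diag_eq_zero_of_param_one n
  · exact H.diag_eq_zero_of_param_ne_zero_of_param_ne_one h00 h0 h1 n

theorem apply_one_of_param_zero (H : IsExtensionFunction (0 : R) h) (n : ℤ) :
    h n 1 = (n + 1) * h 1 0 := by
  have diag_one : h 1 1 = 2 * h 1 0 := by
    have e := H.two_mul_apply_eq_diag 0 1
    rw [H.symm 0 1] at e
    push_cast at e
    linear_combination e
  have e := H.two_mul_apply_eq_diag n 1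
  rw [diag_one] at e
  push_cast at e
  apply mul_left_cancel₀ (two_ne_zero (α := R))
  linear_combination -e

theorem diag_of_param_zero (H : IsExtensionFunction (0 : R) h) (r : ℤ) :
    h r r = 2 * r * h 1 0 := by
  have of_ne_neg_one {r : ℤ} (hr : r ≠ -1) : h r r = 2 * r * h 1 0 := by
    have e := H.two_mul_apply_eq_diag 1 r
    rw [H.symm 1 r, H.apply_one_of_param_zero] at e
    push_cast at e
    have hr' : (r + 1 : R) ≠ 0 := by exact_mod_cast mt eq_neg_of_add_eq_zero_left hr
    apply mul_left_cancel₀ hr'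
    linear_combination e
  rcases eq_or_ne r (-1) with rfl | hr
  · have at_two : h 2 (-1) = h 1 0 := by
      have e := H.two_mul_apply_eq_diag (-1) 2
      rw [H.symm (-1) 2, of_ne_neg_one (r := 2) (by norm_num)] at e
      push_cast at e
      apply mul_left_cancel₀ (show (4 : R) ≠ 0 by norm_num)
      linear_combination -e
    have e := H.two_mul_apply_eq_diag 2 (-1)
    rw [at_two] at e
    push_cast at e ⊢
    linear_combination e
  · exact of_ne_neg_one hr

theorem eq_add_mul_of_param_zero (H : IsExtensionFunction (0 : R) h) (r s : ℤ) :
    h r s = (r + s) * h 1 0 := by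
  have of_ne_zero (n : ℤ) {r : ℤ} (hr : r ≠ 0) : h n r = (n + r) * h 1 0 := by
    have e := H.two_mul_apply_eq_diag n r
    rw [H.diag_of_param_zero] at e
    have hr' : (r : R) ≠ 0 := Int.cast_ne_zero.mpr hr
    apply mul_left_cancel₀ (mul_ne_zero two_ne_zero hr')
    linear_combination -e
  rcases eq_or_ne s 0 with rfl | hs
  · rcases eq_or_ne r 0 with rfl | hr
    · simpa using H.diag_of_param_zero 0
    · rw [H.symm, of_ne_zero 0 hr, add_comm]
  · exact of_ne_zero r hs

end NoZeroDivisors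

end IsExtensionFunction

theorem h_extension_classification_general {R : Type*} [CommRing R] [NoZeroDivisors R] [CharZero R]
    (ℓ : R) (h : ℤ → ℤ → R) (hsym : ∀ r s : ℤ, h r s = h s r) (h00 : h 0 0 = 0)
    (hrec : ∀ m r s : ℤ,
      ((m : R) * ℓ - (r : R)) * h (m + r) s + ((m : R) * ℓ - (s : R)) * h r (m + s)
        + ((m : R) * ℓ + (m : R) + (r : R) + (s : R)) * h r s = 0) :
    (ℓ ≠ 0 → ∀ r s : ℤ, h r s = 0)
    ∧ (ℓ = 0 → ∀ r s : ℤ, h r s = ((r : R) + (s : R)) * h 1 0) := by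
  have H : IsExtensionFunction ℓ h := ⟨hsym, hrec⟩
  refine ⟨H.eq_zero_of_param_ne_zero h00, ?_⟩
  rintro rfl
  exact H.eq_add_mul_of_param_zero

/-- Let `ℓ` be a nonnegative integer and `h : ℤ×ℤ → ℂ` a symmetric
function satisfying the cyclic identity `h(r,s) + h(s,−r−s) + h(−r−s,r) = 0` and the
recurrence `(mℓ − r)h(m+r, s) + (mℓ − s)h(r, m+s) + (mℓ + m + r + s)h(r, s) = 0`.
Then `h = 0` if `ℓ ≠ 0`, and `h(r,s) = (r+s)·h(1,0)` if `ℓ = 0`. -/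
theorem h_extension_classification (ℓ : ℕ) (h : ℤ → ℤ → ℂ)
    (hsym : ∀ r s : ℤ, h r s = h s r)
    (hcyc : ∀ r s : ℤ, h r s + h s (-r - s) + h (-r - s) r = 0)
    (hrec : ∀ m r s : ℤ,
      ((m : ℂ) * (ℓ : ℂ) - (r : ℂ)) * h (m + r) s
      + ((m : ℂ) * (ℓ : ℂ) - (s : ℂ)) * h r (m + s)
      + ((m : ℂ) * (ℓ : ℂ) + (m : ℂ) + (r : ℂ) + (s : ℂ)) * h r s = 0) :
    (ℓ ≠ 0 → ∀ r s : ℤ, h r s = 0)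
    ∧ (ℓ = 0 → ∀ r s : ℤ, h r s = ((r : ℂ) + (s : ℂ)) * h 1 0) := by
  have h00 : h 0 0 = 0 := by
    have e := hcyc 0 0
    rw [neg_zero, sub_zero] at e
    linear_combination e / 3
  simpa only [Ne, Nat.cast_eq_zero] using h_extension_classification_general (ℓ : ℂ) h hsym h00 hrec
end

section
/- Let ℓ be a nonnegative integer. Suppose η : ℤ×ℤ → ℂ is antisymmetric (η(u,v) = −η(v,u)) and satisfies both the cyclic identity η(u,v) + η(v,−u−v) + η(−u−v,u) = 0 for all u, v ∈ ℤ and the recurrence (mℓ − u)·η(m+u, v) + (mℓ − v)·η(u, m+v) + (mℓ + m + u + v)·η(u, v) = 0 for all m, u, v ∈ ℤ. Then: if ℓ ≠ 0, η(u,v) = 0 for all u, v; and if ℓ = 0, η(u,v) = (u − v)·η(1, 0) for all u, v. Equivalently, η(u,v) = δ_{ℓ,0}·(u−v)·c for some constant c ∈ ℂ. -/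
/-!
Write `c u = η(u, 0)`. If `ℓ` acts injectively, the recurrence at `(-u, u, 0)` gives
`η(u, -u) = -c u`, so `c` is odd by antisymmetry, and the cyclic identity for `(u, 0, -u)` becomes
`3 c u = 0`. Once `c = 0`, the recurrence at `(m, u, 0)` reads `m ℓ η(u, m) = 0`.

If `ℓ = 0`, the recurrence at `(u - 1, 1, v)` expresses `η` through the single row `b = η(1, ·)`,
and the cyclic identity for `(1, u, -1 - u)` becomes `b(-1 - u) = 2 b u + u b(-2)`. Since
`u ↦ -1 - u` is an involution, applying this twice gives `3 b u = (1 - u) b(-2)`; the case `u = 0`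
identifies `b(-2)` with `3 η(1, 0)`.
-/

section ExtensionCoefficient

variable {R M : Type*} [CommRing R] [AddCommGroup M] [Module R M]

/-- Antisymmetry and the graded Jacobi identities, for `(X_u, X_v, X_w)` and `(L_m, X_{uv}, X_w)`,
of the coefficient `η` in the central extension term `[X_{uv}, X_w] = δ_{u+v+w,0} η(u, v)`.
The parameter `ℓ` is taken in a ring of scalars `R` and the values of `η` in an `R`-module. -/
structure IsExtensionCoefficient (ℓ : R) (η : ℤ → ℤ → M) : Prop where
  antisymm (u v : ℤ) : η u v = -η v u
  cyclic (u v : ℤ) : η u v + η v (-u - v) + η (-u - v) u = 0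
  recurrence (m u v : ℤ) :
    ((m : R) * ℓ - u) • η (m + u) v + ((m : R) * ℓ - v) • η u (m + v)
      + ((m : R) * ℓ + m + u + v) • η u v = 0

theorem eq_zero_of_intCast_mul_smul_eq_zero [IsAddTorsionFree M] {ℓ : R}
    (hℓ : IsSMulRegular M ℓ) {n : ℤ} (hn : n ≠ 0) {x : M} (hx : ((n : R) * ℓ) • x = 0) :
    x = 0 := by
  rw [mul_smul, Int.cast_smul_eq_zsmul, smul_eq_zero_iff_right hn] at hx
  exact hℓ.right_eq_zero_of_smul hx

namespace IsExtensionCoefficient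

variable {η : ℤ → ℤ → M}

theorem apply_self [IsAddTorsionFree M] {ℓ : R} (h : IsExtensionCoefficient ℓ η) (u : ℤ) :
    η u u = 0 :=
  self_eq_neg.mp (h.antisymm u u)

section Regular

variable [IsAddTorsionFree M] {ℓ : R}

theorem apply_neg_self (h : IsExtensionCoefficient ℓ η) (hℓ : IsSMulRegular M ℓ) (u : ℤ) :
    η u (-u) = -η u 0 := by
  obtain rfl | hu := eq_or_ne u 0
  · exact h.antisymm 0 0
  have hrec := h.recurrence (-u) u 0
  rw [neg_add_cancel, add_zero, h.apply_self] at hrec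
  push_cast at hrec
  refine eq_neg_of_add_eq_zero_left (eq_zero_of_intCast_mul_smul_eq_zero hℓ hu ?_)
  linear_combination (norm := module) -hrec

theorem apply_neg_zero_right (h : IsExtensionCoefficient ℓ η) (hℓ : IsSMulRegular M ℓ) (u : ℤ) :
    η (-u) 0 = -η u 0 :=
  calc
    η (-u) 0 = -η (-u) u := by simpa [neg_eq_iff_eq_neg] using (h.apply_neg_self hℓ (-u)).symm
    _ = η u (-u) := (h.antisymm u (-u)).symm
    _ = -η u 0 := h.apply_neg_self hℓ u

theorem apply_zero_right (h : IsExtensionCoefficient ℓ η) (hℓ : IsSMulRegular M ℓ) (u : ℤ) :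
    η u 0 = 0 := by
  have hcyc := h.cyclic u 0
  rw [sub_zero, h.antisymm 0, h.antisymm (-u) u, h.apply_neg_zero_right hℓ,
    h.apply_neg_self hℓ] at hcyc
  have three_smul : (3 : ℕ) • η u 0 = 0 := by linear_combination (norm := module) hcyc
  exact (smul_eq_zero_iff_right three_ne_zero).mp three_smul

theorem eq_zero (h : IsExtensionCoefficient ℓ η) (hℓ : IsSMulRegular M ℓ) (u v : ℤ) :
    η u v = 0 := by
  obtain rfl | hv := eq_or_ne v 0
  · exact h.apply_zero_right hℓ u
  have hrec := h.recurrence v u 0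
  rw [add_zero, h.apply_zero_right hℓ, h.apply_zero_right hℓ] at hrec
  apply eq_zero_of_intCast_mul_smul_eq_zero hℓ hv
  simpa using hrec

end Regular

section Zero

theorem apply_eq_apply_one (h : IsExtensionCoefficient (0 : R) η) (u v : ℤ) :
    η u v = ((u : R) + v) • η 1 v - (v : R) • η 1 (u + v - 1) := by
  have hrec := h.recurrence (u - 1) 1 v
  rw [sub_add_cancel, sub_add_eq_add_sub] at hrec
  push_cast at hrec
  linear_combination (norm := module) -hrec

theorem apply_one_reflect (h : IsExtensionCoefficient (0 : R) η) (u : ℤ) :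
    η 1 (-1 - u) = (2 : R) • η 1 u + (u : R) • η 1 (-2) := by
  have hcyc := h.cyclic 1 u
  have hlast := h.apply_eq_apply_one (-1 - u) u
  rw [h.antisymm u, h.antisymm _ 1] at hcyc
  rw [sub_add_cancel, show (-1 - 1 : ℤ) = -2 by norm_num] at hlast
  push_cast at hlast
  linear_combination (norm := module) -hcyc - hlast

variable [IsAddTorsionFree M]

theorem apply_one (h : IsExtensionCoefficient (0 : R) η) (u : ℤ) :
    η 1 u = (1 - (u : R)) • η 1 0 := by
  have three_smul (v : ℤ) : (3 : R) • η 1 v = (1 - (v : R)) • η 1 (-2) := by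
    have hreflect := h.apply_one_reflect (-1 - v)
    rw [sub_sub_cancel, h.apply_one_reflect v] at hreflect
    push_cast at hreflect
    linear_combination (norm := module) -hreflect
  have apply_neg_two : η 1 (-2) = (3 : R) • η 1 0 := by simpa using (three_smul 0).symm
  suffices (3 : ℕ) • η 1 u = (3 : ℕ) • (1 - (u : R)) • η 1 0 from
    nsmul_right_injective three_ne_zero this
  linear_combination (norm := module) three_smul u + (1 - (u : R)) • apply_neg_two

theorem eq_sub_smul (h : IsExtensionCoefficient (0 : R) η) (u v : ℤ) :
    η u v = ((u : R) - v) • η 1 0 := by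
  rw [h.apply_eq_apply_one, h.apply_one v, h.apply_one (u + v - 1)]
  push_cast
  module

end Zero

end IsExtensionCoefficient

theorem eta_extension_classification_general [IsAddTorsionFree M] {ℓ : R} {η : ℤ → ℤ → M}
    (h : IsExtensionCoefficient ℓ η) :
    (IsSMulRegular M ℓ → ∀ u v : ℤ, η u v = 0)
    ∧ (ℓ = 0 → ∀ u v : ℤ, η u v = ((u : R) - (v : R)) • η 1 0) :=
  ⟨h.eq_zero, fun hℓ => (hℓ ▸ h).eq_sub_smul⟩

end ExtensionCoefficient

/-- Let `ℓ` be a nonnegative integer and `η : ℤ×ℤ → ℂ` an antisymmetric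
function satisfying the cyclic identity `η(u,v) + η(v,−u−v) + η(−u−v,u) = 0` and the
recurrence `(mℓ − u)η(m+u, v) + (mℓ − v)η(u, m+v) + (mℓ + m + u + v)η(u, v) = 0`.
Then `η = 0` if `ℓ ≠ 0`, and `η(u,v) = (u−v)·η(1,0)` if `ℓ = 0`. -/
theorem eta_extension_classification (ℓ : ℕ) (η : ℤ → ℤ → ℂ)
    (hanti : ∀ u v : ℤ, η u v = - η v u)
    (hcyc : ∀ u v : ℤ, η u v + η v (-u - v) + η (-u - v) u = 0)
    (hrec : ∀ m u v : ℤ,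
      ((m : ℂ) * (ℓ : ℂ) - (u : ℂ)) * η (m + u) v
      + ((m : ℂ) * (ℓ : ℂ) - (v : ℂ)) * η u (m + v)
      + ((m : ℂ) * (ℓ : ℂ) + (m : ℂ) + (u : ℂ) + (v : ℂ)) * η u v = 0) :
    (ℓ ≠ 0 → ∀ u v : ℤ, η u v = 0)
    ∧ (ℓ = 0 → ∀ u v : ℤ, η u v = ((u : ℂ) - (v : ℂ)) * η 1 0) := by
  have h : IsExtensionCoefficient (ℓ : ℂ) η := ⟨hanti, hcyc, hrec⟩
  have ⟨regular, zero⟩ := eta_extension_classification_general h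
  exact ⟨fun hℓ => regular (.of_ne_zero (Nat.cast_ne_zero.mpr hℓ)),
    fun hℓ => zero (Nat.cast_eq_zero.mpr hℓ)⟩
end
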